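/- arXiv:2210.04283 — 10 statements merged into one kernel-verified Lean document; each statement's English description precedes it below -/
import Mathlib

section
/- Every 2×2 matrix with integer entries, all of which are nonnegative, and with determinant 1 belongs to the multiplicative submonoid of 2×2 integer matrices generated by the two basic shears S = [[1,1],[0,1]] and T = [[1,0],[1,1]]. -/
theorem shears_aux (n : ℕ) : ∀ a b c d : ℤ, 0 ≤ a → 0 ≤ b → 0 ≤ c → 0 ≤ d →
    a * d - b * c = 1 → a + b + c + d ≤ n →
    !![a, b; c, d] ∈ Submonoid.closure
      ({!![1, 1; 0, 1], !![1, 0; 1, 1]} : Set (Matrix (Fin 2) (Fin 2) ℤ)) := by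
  induction n with
  | zero =>
    intro a b c d ha hb hc hd h hn
    have h0 : a = 0 := by push_cast at hn; omega
    have h1 : b = 0 := by push_cast at hn; omega
    subst h0 h1
    simp at h
  | succ n ih =>
    intro a b c d ha hb hc hd h hn
    push_cast at hn
    have ha1 : 1 ≤ a := by
      by_contra hlt
      have : a = 0 := by omega
      subst this
      nlinarith [mul_nonneg hb hc]
    have hd1 : 1 ≤ d := by
      by_contra hlt
      have : d = 0 := by omega
      subst this
      nlinarith [mul_nonneg hb hc]
    by_cases h1 : c ≤ a ∧ d ≤ b
    · have key := ih (a - c) (b - d) c d (by omega) (by omega) hc hd (by linarith) (by omega)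
      have e : !![a, b; c, d] = !![1, 1; 0, 1] * !![a - c, b - d; c, d] := by
        simp [Matrix.mul_fin_two]
      rw [e]
      exact mul_mem (Submonoid.subset_closure (by simp)) key
    by_cases h2 : a ≤ c ∧ b ≤ d
    · have key := ih a b (c - a) (d - b) ha hb (by omega) (by omega) (by linarith) (by omega)
      have e : !![a, b; c, d] = !![1, 0; 1, 1] * !![a, b; c - a, d - b] := by
        simp [Matrix.mul_fin_two]
      rw [e]
      exact mul_mem (Submonoid.subset_closure (by simp)) key
    by_cases h3 : c < a
    · have h4 : b < d := by omega
      have h5 : (c + 1) * (b + 1) ≤ a * d := by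
        apply mul_le_mul <;> omega
      have hb0 : b = 0 := by nlinarith
      have hc0 : c = 0 := by nlinarith
      subst hb0 hc0
      have ha2 : a = 1 := by nlinarith
      have hd2 : d = 1 := by nlinarith
      subst ha2 hd2
      rw [← Matrix.one_fin_two]
      exact one_mem _
    · have h4 : a ≤ c := by omega
      have h5 : d ≤ b := by omega
      have h6 : d * a ≤ b * c := mul_le_mul h5 h4 ha hb
      nlinarith

theorem nonneg_det_one_mem_closure_shears
    (M : Matrix (Fin 2) (Fin 2) ℤ)
    (hnonneg : ∀ i j, 0 ≤ M i j) (hdet : M.det = 1) :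
    M ∈ Submonoid.closure
      ({!![1, 1; 0, 1], !![1, 0; 1, 1]} : Set (Matrix (Fin 2) (Fin 2) ℤ)) := by
  rw [Matrix.det_fin_two] at hdet
  rw [Matrix.eta_fin_two M]
  exact shears_aux (M 0 0 + M 0 1 + M 1 0 + M 1 1).toNat _ _ _ _ (hnonneg _ _) (hnonneg _ _)
    (hnonneg _ _) (hnonneg _ _) hdet (Int.self_le_toNat _)
end

section
/- Let α ∈ (0,1) be irrational and β ∈ ℝ, and define u : ℕ → ℤ by u(n) = ⌊(n+1)α + β⌋ − ⌊nα + β⌋. Then u is Sturmian: for every n : ℕ, the number of distinct words of length n occurring in u equals n + 1, i.e., Set.ncard {w : Fin n → ℤ | ∃ k, ∀ i, w i = u (k + i)} = n + 1. -/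
/-- Density: some `k * α + β`, `k : ℕ`, lies in `(a, b)` modulo `1`. -/
lemma exists_nat_mul_add_mem (α β a b : ℝ) (hirr : Irrational α) (hab : a < b) :
    ∃ (k : ℕ) (m : ℤ), a < (k : ℝ) * α + β + m ∧ (k : ℝ) * α + β + m < b := by
  have hd : DenseRange (fun n : ℤ => n • ((α : ℝ) : AddCircle (1 : ℝ))) :=
    AddCircle.denseRange_zsmul_coe_iff.2 (by simpa using hirr)
  have hd2 := denseRange_zsmul_iff_nsmul.1 hd
  have ho : IsOpen ((fun x : ℝ => (x : AddCircle (1 : ℝ))) '' Set.Ioo (a - β) (b - β)) :=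
    QuotientAddGroup.isOpenMap_coe _ isOpen_Ioo
  have hne : ((fun x : ℝ => (x : AddCircle (1 : ℝ))) '' Set.Ioo (a - β) (b - β)).Nonempty :=
    (Set.nonempty_Ioo.2 (by linarith)).image _
  obtain ⟨k, y, hy, hk⟩ := hd2.exists_mem_open ho hne
  have hk' : ((y - (k : ℝ) * α : ℝ) : AddCircle (1 : ℝ)) = 0 := by
    have : ((k : ℝ) * α) = k • α := by simp
    rw [AddCircle.coe_sub, this, AddCircle.coe_nsmul]
    exact sub_eq_zero.2 hk
  obtain ⟨m, hm⟩ := (AddCircle.coe_eq_zero_iff (1 : ℝ)).1 hk'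
  refine ⟨k, m, ?_⟩
  have hm' : (m : ℝ) = y - k * α := by simpa using hm
  constructor <;> linarith [hy.1, hy.2]

/-- `⌊jα + x⌋` in terms of the threshold `fract (-jα)`. -/
lemma floor_add_threshold (c x : ℝ) (hx0 : 0 ≤ x) (hx1 : x < 1) :
    ⌊c + x⌋ = -⌊-c⌋ + (if Int.fract (-c) ≤ x then 0 else -1) := by
  have h1 := Int.fract_nonneg (-c)
  have h2 := Int.fract_lt_one (-c)
  have h3 := Int.floor_add_fract (-c)
  rw [Int.floor_eq_iff]
  split_ifs with h
  · push_cast; constructor <;> linarith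
  · push_cast; push Not at h; constructor <;> linarith

/-- The word of length `n` read from the point `x`. -/
noncomputable def mechWord (α : ℝ) (n : ℕ) (x : ℝ) : Fin n → ℤ :=
  fun i => ⌊(((i : ℕ) : ℝ) + 1) * α + x⌋ - ⌊((i : ℕ) : ℝ) * α + x⌋

lemma mechWord_add_int (α : ℝ) (n : ℕ) (x : ℝ) (m : ℤ) :
    mechWord α n (x + m) = mechWord α n x := by
  funext i
  simp only [mechWord, ← add_assoc, Int.floor_add_intCast]
  ring

lemma mechWord_eq_iff (α : ℝ) (n : ℕ) (x y : ℝ) (hx0 : 0 ≤ x) (hx1 : x < 1)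
    (hy0 : 0 ≤ y) (hy1 : y < 1) :
    mechWord α n x = mechWord α n y ↔
      ∀ j ∈ Finset.range (n + 1), (Int.fract (-((j : ℝ) * α)) ≤ x ↔
        Int.fract (-((j : ℝ) * α)) ≤ y) := by
  have key : ∀ j : ℕ, ⌊(j : ℝ) * α + x⌋ = ⌊(j : ℝ) * α + y⌋ ↔
      (Int.fract (-((j : ℝ) * α)) ≤ x ↔ Int.fract (-((j : ℝ) * α)) ≤ y) := by
    intro j
    rw [floor_add_threshold _ x hx0 hx1, floor_add_threshold _ y hy0 hy1]
    split_ifs with p q q <;> simp [p, q, -not_le]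
  simp only [← key]
  constructor
  · intro h j
    induction j with
    | zero =>
      intro _
      simp [Int.floor_eq_zero_iff.2 ⟨hx0, hx1⟩, Int.floor_eq_zero_iff.2 ⟨hy0, hy1⟩]
    | succ j ih =>
      intro hj
      rw [Finset.mem_range] at hj
      have h1 := ih (Finset.mem_range.2 (by omega))
      have h2 := congrFun h ⟨j, by omega⟩
      simp only [mechWord] at h2
      push_cast
      omega
  · intro h
    funext i
    have h1 := h i (Finset.mem_range.2 (by omega))
    have h2 := h (i + 1) (Finset.mem_range.2 (by omega))
    push_cast at h2
    simp only [mechWord, h1, h2]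

theorem mechanical_irrational_is_sturmian (α β : ℝ) (h0 : 0 < α) (h1 : α < 1)
    (hirr : α ∉ Set.range ((↑) : ℚ → ℝ))
    (u : ℕ → ℤ) (hu : ∀ n : ℕ, u n = ⌊((n : ℝ) + 1) * α + β⌋ - ⌊(n : ℝ) * α + β⌋) :
    ∀ n : ℕ, Set.ncard {w : Fin n → ℤ | ∃ k : ℕ, ∀ i : Fin n, w i = u (k + i)} = n + 1 := by
  intro n
  have hI : Irrational α := hirr
  have hword : ∀ k : ℕ, (fun i : Fin n => u (k + i)) = mechWord α n ((k : ℝ) * α + β) := by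
    intro k
    funext i
    simp only [hu, mechWord]
    push_cast
    congr 2 <;> ring
  set t : ℕ → ℝ := fun j => Int.fract (-((j : ℝ) * α)) with ht
  set T : Finset ℝ := (Finset.range (n + 1)).image t with hT
  have tinj : Function.Injective t := by
    intro i j hij
    by_contra hne
    obtain ⟨z, hz⟩ := Int.fract_eq_fract.1 hij
    have hne' : ((j : ℤ) - (i : ℤ)) ≠ 0 := by omega
    have := hI.intCast_mul hne'
    apply this
    refine ⟨z, ?_⟩
    push_cast
    linarith
  have hTcard : T.card = n + 1 := by
    rw [hT, Finset.card_image_of_injective _ tinj, Finset.card_range]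
  have hT0 : (0 : ℝ) ∈ T := Finset.mem_image.2 ⟨0, by simp, by simp [ht]⟩
  have hTb : ∀ s ∈ T, 0 ≤ s ∧ s < 1 := by
    intro s hs
    obtain ⟨j, -, rfl⟩ := Finset.mem_image.1 hs
    exact ⟨Int.fract_nonneg _, Int.fract_lt_one _⟩
  have hiff : ∀ x y : ℝ, 0 ≤ x → x < 1 → 0 ≤ y → y < 1 →
      (mechWord α n x = mechWord α n y ↔ ∀ s ∈ T, (s ≤ x ↔ s ≤ y)) := by
    intro x y a b c d
    rw [mechWord_eq_iff α n x y a b c d]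
    simp [hT, ht]
  have hset : {w : Fin n → ℤ | ∃ k : ℕ, ∀ i : Fin n, w i = u (k + i)} =
      mechWord α n '' (T : Set ℝ) := by
    ext w
    constructor
    · rintro ⟨k, hk⟩
      have hw : w = mechWord α n (Int.fract ((k : ℝ) * α + β)) := by
        rw [← mechWord_add_int α n _ ⌊(k : ℝ) * α + β⌋, Int.fract_add_floor, ← hword]
        exact funext hk
      set x := Int.fract ((k : ℝ) * α + β) with hx
      have hx0 : 0 ≤ x := Int.fract_nonneg _
      have hx1 : x < 1 := Int.fract_lt_one _
      obtain ⟨s, hs, hmax⟩ := (T.filter (· ≤ x)).exists_max_image id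
        ⟨0, Finset.mem_filter.2 ⟨hT0, hx0⟩⟩
      rw [Finset.mem_filter] at hs
      refine ⟨s, hs.1, ?_⟩
      rw [hw, hiff s x (hTb s hs.1).1 (hTb s hs.1).2 hx0 hx1]
      intro r hr
      exact ⟨fun h => h.trans hs.2, fun h => hmax r (Finset.mem_filter.2 ⟨hr, h⟩)⟩
    · rintro ⟨s, hs, rfl⟩
      have hs' : s ∈ T := hs
      obtain ⟨b, hb, hmin⟩ := ((insert 1 T).filter (s < ·)).exists_min_image id
        ⟨1, Finset.mem_filter.2 ⟨Finset.mem_insert_self _ _, (hTb s hs').2⟩⟩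
      rw [Finset.mem_filter] at hb
      have hb1 : b ≤ 1 := hmin 1
        (Finset.mem_filter.2 ⟨Finset.mem_insert_self _ _, (hTb s hs').2⟩)
      obtain ⟨k, m, hk1, hk2⟩ := exists_nat_mul_add_mem α β s b hI hb.2
      refine ⟨k, ?_⟩
      have hs0 := (hTb s hs').1
      have : mechWord α n s = mechWord α n ((k : ℝ) * α + β) := by
        rw [← mechWord_add_int α n ((k : ℝ) * α + β) m,
          hiff _ _ hs0 (hTb s hs').2 (by linarith) (by linarith)]
        intro r hr
        refine ⟨fun h => by linarith, fun h => ?_⟩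
        by_contra hlt
        push Not at hlt
        have : b ≤ r := hmin r (Finset.mem_filter.2 ⟨Finset.mem_insert_of_mem hr, hlt⟩)
        linarith
      rw [this, ← hword]
      exact fun i => rfl
  have hinj : Set.InjOn (mechWord α n) (T : Set ℝ) := by
    intro x hx y hy hxy
    have hx' := hTb x hx
    have hy' := hTb y hy
    have h := (hiff x y hx'.1 hx'.2 hy'.1 hy'.2).1 hxy
    exact le_antisymm ((h x hx).1 le_rfl) ((h y hy).2 le_rfl)
  rw [hset, hinj.ncard_image, Set.ncard_coe_finset, hTcard]
end

section
/- Let α ∈ [0,1] and β ∈ ℝ, and define u : ℕ → ℤ by u(n) = ⌊(n+1)α + β⌋ − ⌊nα + β⌋. Then u is balanced: for every n : ℕ and all k, l : ℕ, the number of indices i < n with u(k + i) = 1 and the number of indices i < n with u(l + i) = 1 differ by at most 1. -/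
theorem mechanical_is_balanced (α β : ℝ) (h0 : 0 ≤ α) (h1 : α ≤ 1)
    (u : ℕ → ℤ) (hu : ∀ n : ℕ, u n = ⌊((n : ℝ) + 1) * α + β⌋ - ⌊(n : ℝ) * α + β⌋) :
    ∀ n k l : ℕ,
      |(((Finset.range n).filter (fun i => u (k + i) = 1)).card : ℤ) -
        (((Finset.range n).filter (fun i => u (l + i) = 1)).card : ℤ)| ≤ 1 := by
  have h01 : ∀ n, u n = 0 ∨ u n = 1 := by
    intro n
    have a : ⌊(n : ℝ) * α + β⌋ ≤ ⌊((n : ℝ) + 1) * α + β⌋ := Int.floor_le_floor (by linarith)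
    have b : ⌊((n : ℝ) + 1) * α + β⌋ ≤ ⌊(n : ℝ) * α + β + 1⌋ := Int.floor_le_floor (by linarith)
    rw [Int.floor_add_one] at b
    have := hu n
    omega
  have cnt : ∀ k n : ℕ, (((Finset.range n).filter (fun i => u (k + i) = 1)).card : ℤ)
      = ⌊((k : ℝ) + n) * α + β⌋ - ⌊(k : ℝ) * α + β⌋ := by
    intro k n
    induction n with
    | zero => simp
    | succ n ih =>
      have e := hu (k + n)
      push_cast at e ⊢
      rw [← add_assoc]
      rw [Finset.range_add_one, Finset.filter_insert]
      rcases h01 (k + n) with h | h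
      · rw [if_neg (by omega)]
        omega
      · rw [if_pos h, Finset.card_insert_of_notMem (by simp)]
        push_cast
        omega
  intro n k l
  rw [cnt, cnt]
  have a1 := Int.floor_le (((k : ℝ) + n) * α + β)
  have a2 := Int.lt_floor_add_one (((k : ℝ) + n) * α + β)
  have b1 := Int.floor_le ((k : ℝ) * α + β)
  have b2 := Int.lt_floor_add_one ((k : ℝ) * α + β)
  have c1 := Int.floor_le (((l : ℝ) + n) * α + β)
  have c2 := Int.lt_floor_add_one (((l : ℝ) + n) * α + β)
  have d1 := Int.floor_le ((l : ℝ) * α + β)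
  have d2 := Int.lt_floor_add_one ((l : ℝ) * α + β)
  generalize ⌊((k : ℝ) + n) * α + β⌋ = A at *
  generalize ⌊(k : ℝ) * α + β⌋ = B at *
  generalize ⌊((l : ℝ) + n) * α + β⌋ = C at *
  generalize ⌊(l : ℝ) * α + β⌋ = D at *
  have x : (A - B) - (C - D) < 2 := by
    have : (((A - B) - (C - D) : ℤ) : ℝ) < (2 : ℤ) := by push_cast; linarith
    exact_mod_cast this
  have y : -2 < (A - B) - (C - D) := by
    have : ((-2 : ℤ) : ℝ) < (((A - B) - (C - D) : ℤ) : ℝ) := by push_cast; linarith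
    exact_mod_cast this
  rw [abs_le]
  omega
end

section
/- Let α ∈ (0,1) be irrational and β ∈ ℝ, and define u : ℕ → ℤ by u(n) = ⌊(n+1)α + β⌋ − ⌊nα + β⌋. Then u is not eventually periodic: there do not exist N : ℕ and T > 0 such that u(n + T) = u(n) for all n ≥ N. -/
theorem mechanical_irrational_not_eventually_periodic (α β : ℝ) (h0 : 0 < α) (h1 : α < 1)
    (hirr : α ∉ Set.range ((↑) : ℚ → ℝ))
    (u : ℕ → ℤ) (hu : ∀ n : ℕ, u n = ⌊((n : ℝ) + 1) * α + β⌋ - ⌊(n : ℝ) * α + β⌋) :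
    ¬ ∃ (N : ℕ) (T : ℕ), 0 < T ∧ ∀ n : ℕ, N ≤ n → u (n + T) = u n := by
  rintro ⟨N, T, hT, hp⟩
  obtain ⟨f, hf⟩ : ∃ f : ℕ → ℤ, ∀ n : ℕ, f n = ⌊(n : ℝ) * α + β⌋ := ⟨_, fun _ => rfl⟩
  have hu' : ∀ n, u n = f (n + 1) - f n := by
    intro n
    rw [hu, hf, hf]
    push_cast
    rfl
  obtain ⟨c, hc⟩ : ∃ c : ℤ, c = f (N + T) - f N := ⟨_, rfl⟩
  have hstep : ∀ m : ℕ, f (N + m + T) - f (N + m) = c := by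
    intro m
    induction m with
    | zero => simp [hc]
    | succ m ih =>
      have h := hp (N + m) (by omega)
      rw [hu', hu'] at h
      have e1 : N + (m + 1) + T = N + m + T + 1 := by ring
      have e2 : N + (m + 1) = N + m + 1 := by ring
      rw [e1, e2]
      linarith
  have hk : ∀ k : ℕ, f (N + k * T) = f N + k * c := by
    intro k
    induction k with
    | zero => simp
    | succ k ih =>
      have h := hstep (k * T)
      have e : N + (k + 1) * T = N + k * T + T := by ring
      rw [e]
      push_cast
      linarith
  have hb : ∀ n : ℕ, (f n : ℝ) ≤ n * α + β ∧ (n : ℝ) * α + β < f n + 1 := by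
    intro n
    rw [hf]
    exact ⟨Int.floor_le _, Int.lt_floor_add_one _⟩
  have hT' : (T : ℝ) ≠ 0 := by positivity
  have hne : (c : ℝ) - T * α ≠ 0 := by
    intro h
    apply hirr
    refine ⟨(c : ℚ) / T, ?_⟩
    push_cast
    field_simp
    linarith
  obtain ⟨k, hk1⟩ := exists_nat_gt (1 / |(c : ℝ) - T * α|)
  rw [div_lt_iff₀ (abs_pos.mpr hne)] at hk1
  have hlt : |(k : ℝ) * (c - T * α)| < 1 := by
    obtain ⟨a1, a2⟩ := hb N
    obtain ⟨b1, b2⟩ := hb (N + k * T)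
    rw [hk] at b1 b2
    push_cast at b1 b2
    rw [abs_lt]
    constructor <;> nlinarith
  rw [abs_mul, Nat.abs_cast] at hlt
  linarith
end

section
/- Let u : ℕ → Bool be a Sturmian sequence, i.e., for every n : ℕ the complexity p(u, n) = Set.ncard {w : Fin n → Bool | ∃ k, ∀ i, w i = u (k + i)} equals n + 1. Then u is recurrent: every word that occurs in u occurs infinitely often. Precisely, for all n, k : ℕ and every N : ℕ there exists m ≥ N such that u(m + i) = u(k + i) for all i < n. -/
/-- A sequence whose tail from `a` agrees with its tail from `b > a` has at most `b` words
of each length. -/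
lemma not_sturmian_of_periodic (u : ℕ → Bool) (a b : ℕ) (hab : a < b)
    (h : ∀ j, u (a + j) = u (b + j)) :
    Set.ncard {w : Fin b → Bool | ∃ k : ℕ, ∀ i : Fin b, w i = u (k + i)} ≤ b := by
  have key : ∀ k, ∃ k' < b, ∀ i, u (k + i) = u (k' + i) := by
    intro k
    induction k using Nat.strong_induction_on with
    | _ k ih =>
      by_cases hk : k < b
      · exact ⟨k, hk, fun _ => rfl⟩
      · obtain ⟨k', hk', hh⟩ := ih (a + (k - b)) (by omega)
        refine ⟨k', hk', fun i => ?_⟩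
        rw [← hh i, add_assoc, h, ← add_assoc]
        congr 2
        omega
  have hsub : {w : Fin b → Bool | ∃ k : ℕ, ∀ i : Fin b, w i = u (k + i)} ⊆
      (fun k (i : Fin b) => u (k + i)) '' (Finset.range b : Set ℕ) := by
    rintro w ⟨k, hk⟩
    obtain ⟨k', hk', hh⟩ := key k
    refine ⟨k', by simpa using hk', ?_⟩
    funext i
    rw [hk, hh]
  calc _ ≤ _ := Set.ncard_le_ncard hsub (Set.toFinite _)
    _ ≤ _ := Set.ncard_image_le (Set.toFinite _)
    _ = b := by rw [Set.ncard_coe_finset, Finset.card_range]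

/-- If the complexity of the tail does not grow from `m` to `m+1`, the tail is periodic. -/
lemma periodic_of_ncard_eq (v : ℕ → Bool) (m : ℕ)
    (h : (Set.range (fun k (i : Fin (m + 1)) => v (k + i))).ncard ≤
      (Set.range (fun k (i : Fin m) => v (k + i))).ncard) :
    ∃ a b, a < b ∧ ∀ j, v (a + j) = v (b + j) := by
  have him : (fun (w : Fin (m + 1) → Bool) (i : Fin m) => w i.castSucc) ''
      Set.range (fun k (i : Fin (m + 1)) => v (k + i)) =
      Set.range (fun k (i : Fin m) => v (k + i)) := by
    rw [← Set.range_comp]; rfl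
  have hinj : Set.InjOn (fun (w : Fin (m + 1) → Bool) (i : Fin m) => w i.castSucc)
      (Set.range (fun k (i : Fin (m + 1)) => v (k + i))) := by
    apply Set.injOn_of_ncard_image_eq _ (Set.toFinite _)
    apply le_antisymm (Set.ncard_image_le (Set.toFinite _))
    rw [him]; exact h
  have step : ∀ a b, (∀ i < m, v (a + i) = v (b + i)) → ∀ i < m + 1, v (a + i) = v (b + i) := by
    intro a b hab i hi
    have := hinj ⟨a, rfl⟩ ⟨b, rfl⟩ (by funext i; exact hab i i.2)
    exact congrFun this ⟨i, hi⟩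
  have ext : ∀ a b, (∀ i < m, v (a + i) = v (b + i)) →
      ∀ j, ∀ i < m + 1, v (a + j + i) = v (b + j + i) := by
    intro a b hab j
    induction j with
    | zero => exact step a b hab
    | succ j ih =>
      apply step
      intro i hi
      have := ih (i + 1) (by omega)
      rw [show a + (j + 1) + i = a + j + (i + 1) by ring,
        show b + (j + 1) + i = b + j + (i + 1) by ring, this]
  obtain ⟨a, b, hne, hab⟩ :=
    Finite.exists_ne_map_eq_of_infinite (fun k (i : Fin m) => v (k + i))
  have hab' : ∀ i < m, v (a + i) = v (b + i) := fun i hi => congrFun hab ⟨i, hi⟩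
  have fin : ∀ j, v (a + j) = v (b + j) := fun j => ext a b hab' j 0 (by omega)
  rcases lt_or_gt_of_ne hne with hlt | hlt
  · exact ⟨a, b, hlt, fin⟩
  · exact ⟨b, a, hlt, fun j => (fin j).symm⟩

theorem sturmian_recurrent (u : ℕ → Bool)
    (hs : ∀ n : ℕ,
      Set.ncard {w : Fin n → Bool | ∃ k : ℕ, ∀ i : Fin n, w i = u (k + i)} = n + 1) :
    ∀ n k N : ℕ, ∃ m : ℕ, N ≤ m ∧ ∀ i : ℕ, i < n → u (m + i) = u (k + i) := by
  intro n k N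
  by_contra hcon
  have hlt : (Set.range (fun l (i : Fin n) => u (N + (l + i)))).ncard < n + 1 := by
    rw [← hs n]
    apply Set.ncard_lt_ncard _ (Set.toFinite _)
    rw [Set.ssubset_iff_of_subset]
    · refine ⟨fun i => u (k + i), ⟨k, fun _ => rfl⟩, ?_⟩
      rintro ⟨l, hl⟩
      exact hcon ⟨N + l, by omega, fun i hi => by
        have := congrFun hl ⟨i, hi⟩
        simpa [add_assoc] using this⟩
    · rintro w ⟨l, rfl⟩
      exact ⟨N + l, fun i => by simp [add_assoc]⟩
  have hgrow : ∀ m, m + 1 ≤ (Set.range (fun l (i : Fin m) => u (N + (l + i)))).ncard := by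
    intro m
    induction m with
    | zero =>
      rw [zero_add, Nat.succ_le_iff, Set.ncard_pos (Set.toFinite _)]
      exact Set.range_nonempty _
    | succ m ih =>
      by_contra hc
      obtain ⟨a, b, hab, hp⟩ := periodic_of_ncard_eq (fun j => u (N + j)) m (by omega)
      have := not_sturmian_of_periodic u (N + a) (N + b) (by omega)
        (fun j => by simpa [add_assoc] using hp j)
      rw [hs] at this
      omega
  have := hgrow n
  omega
end

section
/- Let u : ℕ → Bool be a sequence that is not balanced. Then there is a (possibly empty) word W such that both 0W0 and 1W1 occur in u: there exist n : ℕ and positions k, l : ℕ such that u(k) = false, u(k + n + 1) = false, u(l) = true, u(l + n + 1) = true, and u(k + 1 + i) = u(l + 1 + i) for all i < n. -/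
def ctT (u : ℕ → Bool) (k n : ℕ) : ℕ :=
  ((Finset.range n).filter (fun i => u (k + i) = true)).card

theorem ctT_succ (u : ℕ → Bool) (k n : ℕ) :
    ctT u k (n + 1) = ctT u k n + (if u (k + n) = true then 1 else 0) := by
  unfold ctT
  rw [Finset.range_add_one, Finset.filter_insert]
  split_ifs <;> simp

theorem ctT_zero (u : ℕ → Bool) (k : ℕ) : ctT u k 0 = 0 := by simp [ctT]

theorem ctT_add (u : ℕ → Bool) (k a b : ℕ) :
    ctT u k (a + b) = ctT u k a + ctT u (k + a) b := by
  induction b with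
  | zero => simp [ctT_zero]
  | succ b ih => rw [← add_assoc, ctT_succ, ctT_succ, ih, add_assoc, add_assoc k]

theorem not_balanced_exists_0W0_1W1 (u : ℕ → Bool)
    (h : ¬ ∀ n k l : ℕ,
      |(((Finset.range n).filter (fun i => u (k + i) = true)).card : ℤ) -
        (((Finset.range n).filter (fun i => u (l + i) = true)).card : ℤ)| ≤ 1) :
    ∃ n k l : ℕ, u k = false ∧ u (k + n + 1) = false ∧
      u l = true ∧ u (l + n + 1) = true ∧
      ∀ i : ℕ, i < n → u (k + 1 + i) = u (l + 1 + i) := by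
  have hex : ∃ n, ∃ k l, ctT u k n + 2 ≤ ctT u l n := by
    push Not at h
    obtain ⟨n, k, l, h⟩ := h
    change 1 < |(ctT u k n : ℤ) - (ctT u l n : ℤ)| at h
    rcases lt_abs.1 h with h | h
    · exact ⟨n, l, k, by omega⟩
    · exact ⟨n, k, l, by omega⟩
  classical
  obtain ⟨N, ⟨k, l, hkl⟩, hmin⟩ : ∃ N, (∃ k l, ctT u k N + 2 ≤ ctT u l N) ∧
      ∀ m < N, ∀ k l, ctT u l m ≤ ctT u k m + 1 := by
    refine ⟨Nat.find hex, Nat.find_spec hex, fun m hm k l => ?_⟩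
    by_contra hc
    exact Nat.find_min hex hm ⟨k, l, by omega⟩
  have key : ∀ j, 0 < j → j < N → ctT u l j = ctT u k j + 1 := by
    intro j h0 hj
    have h1 := hmin j hj k l
    have h2 := hmin (N - j) (by omega) (k + j) (l + j)
    have h3 := ctT_add u k j (N - j)
    have h4 := ctT_add u l j (N - j)
    rw [Nat.add_sub_cancel' hj.le] at h3 h4
    omega
  have one : ∀ k, ctT u k 1 = if u k = true then 1 else 0 := by
    intro k
    simpa [ctT_zero] using ctT_succ u k 0
  have hN : 2 ≤ N := by
    by_contra hc
    have : N = 0 ∨ N = 1 := by omega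
    rcases this with rfl | rfl
    · simp [ctT_zero] at hkl
    · rw [one, one] at hkl
      split_ifs at hkl <;> omega
  obtain ⟨n, rfl⟩ : ∃ n, N = n + 2 := ⟨N - 2, by omega⟩
  have first := key 1 (by omega) (by omega)
  rw [one, one] at first
  have last := key (n + 1) (by omega) (by omega)
  rw [ctT_succ u k (n + 1), ctT_succ u l (n + 1)] at hkl
  simp only [← add_assoc] at hkl
  refine ⟨n, k, l, ?_, ?_, ?_, ?_, ?_⟩
  · cases h : u k <;> simp [h] at first ⊢
    split_ifs at first <;> omega
  · cases h : u (k + n + 1) <;> simp [h] at hkl ⊢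
    split_ifs at hkl <;> omega
  · cases h : u l <;> simp [h] at first ⊢
  · cases h : u (l + n + 1) <;> simp [h] at hkl ⊢
    omega
  · intro i hi
    have a := key (i + 1) (by omega) (by omega)
    have b := key (i + 1 + 1) (by omega) (by omega)
    rw [ctT_succ u k (i + 1), ctT_succ u l (i + 1)] at b
    rw [add_assoc, add_assoc l, add_comm 1 i]
    cases h : u (k + (i + 1)) <;> cases h' : u (l + (i + 1)) <;> simp [h, h'] at b ⊢ <;> omega
end

section
/- Let u : ℕ → Bool be a Sturmian sequence, i.e., for every n : ℕ the complexity p(u, n) = Set.ncard {w : Fin n → Bool | ∃ k, ∀ i, w i = u (k + i)} equals n + 1. Then u is balanced and u is not eventually periodic. -/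
namespace SturmAux

/-- The factor of length `n` at position `a`. -/
def W (u : ℕ → Bool) (n a : ℕ) : Fin n → Bool := fun i => u (a + i)

/-- Positions `a` and `b` carry the same factor of length `n`. -/
def Ag (u : ℕ → Bool) (n a b : ℕ) : Prop := ∀ i, i < n → u (a + i) = u (b + i)

lemma W_eq {u : ℕ → Bool} {n a b : ℕ} : W u n a = W u n b ↔ Ag u n a b := by
  constructor
  · intro h i hi
    exact congrFun h ⟨i, hi⟩
  · intro h
    funext i
    exact h i i.2

/-- Sturmian, in terms of the range of `W`. -/
def St (u : ℕ → Bool) : Prop := ∀ n, (Set.range (W u n)).ncard = n + 1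

lemma restr (u : ℕ → Bool) (n a : ℕ) :
    (fun i : Fin n => W u (n+1) a i.castSucc) = W u n a := by
  funext i; rfl

lemma unique_special {u : ℕ → Bool} (hs : St u) {n a a' b b' : ℕ}
    (h1 : Ag u n a a') (h2 : u (a + n) ≠ u (a' + n))
    (h3 : Ag u n b b') (h4 : u (b + n) ≠ u (b' + n)) : Ag u n a b := by
  by_contra hab
  have hne : W u (n+1) a' ≠ W u (n+1) b' := by
    intro h
    rw [W_eq] at h
    apply hab
    intro i hi
    rw [h1 i hi, h i (by omega), h3 i hi]
  set S := Set.range (W u (n+1)) \ {W u (n+1) a', W u (n+1) b'} with hS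
  have hc : S.ncard = n := by
    have hsub : ({W u (n+1) a', W u (n+1) b'} : Set (Fin (n+1) → Bool)) ⊆
        Set.range (W u (n+1)) := by
      rintro x (rfl | rfl) <;> exact ⟨_, rfl⟩
    rw [hS, Set.ncard_sdiff hsub, hs, Set.ncard_pair hne]
    omega
  have hA : W u (n+1) a ∈ S := by
    refine ⟨⟨_, rfl⟩, ?_⟩
    rintro (h | h)
    · exact h2 (W_eq.1 h n (by omega))
    · have h := W_eq.1 h
      exact hab fun i hi => by rw [h i (by omega), h3 i hi]
  have hB : W u (n+1) b ∈ S := by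
    refine ⟨⟨_, rfl⟩, ?_⟩
    rintro (h | h)
    · have h := W_eq.1 h
      exact hab fun i hi => by rw [h i (by omega), h1 i hi]
    · exact h4 (W_eq.1 h n (by omega))
  have hsub : Set.range (W u n) ⊆ (fun w (i : Fin n) => w i.castSucc) '' S := by
    rintro _ ⟨c, rfl⟩
    by_cases hc1 : W u (n+1) c = W u (n+1) a'
    · refine ⟨_, hA, ?_⟩
      have h := W_eq.1 hc1
      refine W_eq.2 (fun i hi => ?_)
      rw [h i (by omega), h1 i hi]
    by_cases hc2 : W u (n+1) c = W u (n+1) b'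
    · refine ⟨_, hB, ?_⟩
      have h := W_eq.1 hc2
      refine W_eq.2 (fun i hi => ?_)
      rw [h i (by omega), h3 i hi]
    · refine ⟨W u (n+1) c, ⟨⟨_, rfl⟩, ?_⟩, rfl⟩
      rintro (h | h)
      · exact hc1 h
      · exact hc2 h
  have := Set.ncard_le_ncard hsub (Set.toFinite _)
  have h5 := Set.ncard_image_le (f := fun w (i : Fin n) => w i.castSucc) (Set.toFinite S)
  rw [hs] at this
  omega

lemma exists_special {u : ℕ → Bool} (hs : St u) (n : ℕ) :
    ∃ a a', Ag u n a a' ∧ u (a + n) ≠ u (a' + n) := by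
  by_contra! hcon
  have : (Set.range (W u (n+1))).ncard ≤ (Set.range (W u n)).ncard := by
    refine Set.ncard_le_ncard_of_injOn (fun w (i : Fin n) => w i.castSucc) ?_ ?_ (Set.toFinite _)
    · rintro _ ⟨c, rfl⟩
      exact ⟨c, rfl⟩
    · rintro _ ⟨c, rfl⟩ _ ⟨d, rfl⟩ h
      have h : Ag u n c d := W_eq.1 h
      refine W_eq.2 fun i hi => ?_
      rcases Nat.lt_succ_iff_lt_or_eq.1 hi with h' | rfl
      · exact h i h'
      · exact hcon _ _ h
  rw [hs, hs] at this
  omega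

lemma aperiodic {u : ℕ → Bool} (hs : St u) (N T : ℕ) (hT : 0 < T)
    (h : ∀ n, N ≤ n → u (n + T) = u n) : False := by
  have key : ∀ c, ∃ d, d < N + T ∧ Ag u (N+T) c d := by
    intro c
    induction c using Nat.strong_induction_on with
    | _ c ih =>
      by_cases hc : c < N + T
      · exact ⟨c, hc, fun _ _ => rfl⟩
      · obtain ⟨d, hd, hd'⟩ := ih (c - T) (by omega)
        refine ⟨d, hd, fun i hi => ?_⟩
        rw [← hd' i hi, ← h (c - T + i) (by omega)]
        congr 1; omega
  have hsub : Set.range (W u (N+T)) ⊆ ((Finset.range (N+T)).image (W u (N+T)) : Finset _) := by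
    rintro _ ⟨c, rfl⟩
    obtain ⟨d, hd, hd'⟩ := key c
    simp only [Finset.coe_image, Set.mem_image, Finset.coe_range, Set.mem_Iio]
    exact ⟨d, hd, (W_eq.2 hd').symm⟩
  have h1 := Set.ncard_le_ncard hsub (Finset.finite_toSet _)
  rw [hs, Set.ncard_coe_finset] at h1
  have h2 := Finset.card_image_le (s := Finset.range (N+T)) (f := W u (N+T))
  rw [Finset.card_range] at h2
  omega

lemma core {u : ℕ → Bool} (hs : St u) {m k s a' : ℕ}
    (hag : Ag u m (k+1) (s+1)) (hk : u (k + m + 1) = u k) (hsk : u s ≠ u k)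
    (hpal : ∀ i, i < m → u (k + 1 + i) = u (k + m - i))
    (h1 : Ag u (m+1) s a') (h2 : u (s + (m+1)) ≠ u (a' + (m+1))) : False := by
  have hno : ∀ j, j ≤ m + 1 → ¬ Ag u (m+1) (k+j) s := by
    intro j hj h
    rcases Nat.eq_zero_or_pos j with rfl | hj0
    · exact hsk (h 0 (by omega)).symm
    rcases Nat.lt_or_ge m j with hj1 | hj1
    · have : j = m + 1 := by omega
      subst this
      have := h 0 (by omega)
      simp only [add_zero] at this
      rw [← this] at hsk
      exact hsk hk
    · have e0 := h 0 (by omega)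
      have e1 := h (m + 1 - j) (by omega)
      have e2 := hag (m - j) (by omega)
      have e3 := hpal (j - 1) (by omega)
      simp only [add_zero] at e0
      rw [show k + j + (m + 1 - j) = k + m + 1 by omega,
        show s + (m + 1 - j) = s + 1 + (m - j) by omega, ← e2] at e1
      rw [show k + 1 + (j - 1) = k + j by omega,
        show k + m - (j - 1) = k + 1 + (m - j) by omega] at e3
      apply hsk
      rw [← e0, e3, ← e1, hk]
  have hns : ∀ x y, Ag u (m+1) x y → ¬ Ag u (m+1) x s → u (x + (m+1)) = u (y + (m+1)) := by
    intro x y hxy hx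
    by_contra hne
    exact hx (unique_special hs hxy hne h1 h2)
  have hpig : ∃ i j, i < j ∧ j ≤ m + 1 ∧ Ag u (m+1) (k+i) (k+j) := by
    have hfin : (Set.range (W u (m+1)) \ {W u (m+1) s}).Finite := Set.toFinite _
    have hcard : hfin.toFinset.card = m + 1 := by
      rw [← Set.ncard_eq_toFinset_card, Set.ncard_sdiff_singleton_of_mem (Set.mem_range_self s), hs]
      omega
    obtain ⟨x, hx, y, hy, hxy, he⟩ := Finset.exists_ne_map_eq_of_card_lt_of_maps_to
      (s := Finset.range (m+2)) (t := hfin.toFinset) (f := fun j => W u (m+1) (k+j))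
      (by rw [hcard, Finset.card_range]; omega)
      (by
        intro j hj
        simp only [Finset.coe_range, Set.mem_Iio] at hj
        simp only [Set.Finite.coe_toFinset]
        refine ⟨⟨_, rfl⟩, fun h => hno j (by omega) (W_eq.1 h)⟩)
    simp only [Finset.mem_range] at hx hy
    have he := W_eq.1 he
    rcases Nat.lt_or_gt_of_ne hxy with h | h
    · exact ⟨x, y, h, by omega, he⟩
    · exact ⟨y, x, h, by omega, fun i hi => (he i hi).symm⟩
  obtain ⟨i, j, hij, hj, hag'⟩ := hpig
  have main : ∀ t, Ag u (m+1) (k+i+t) (k+j+t) ∧ ¬ Ag u (m+1) (k+i+t) s := by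
    intro t
    induction t using Nat.strong_induction_on with
    | _ t ih =>
      constructor
      · rcases Nat.eq_zero_or_pos t with rfl | ht
        · exact hag'
        · obtain ⟨p1, p2⟩ := ih (t-1) (by omega)
          have p3 := hns _ _ p1 p2
          intro r hr
          rw [show k + i + t + r = k + i + (t-1) + (r+1) by omega,
            show k + j + t + r = k + j + (t-1) + (r+1) by omega]
          rcases Nat.lt_or_ge r m with h | h
          · exact p1 (r+1) (by omega)
          · have : r = m := by omega
            rw [this]; exact p3
      · by_cases ht : i + t ≤ m + 1
        · rw [add_assoc]; exact hno _ ht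
        · obtain ⟨p1, p2⟩ := ih (t-(j-i)) (by omega)
          intro h
          apply p2
          intro r hr
          rw [p1 r hr, ← h r hr]
          congr 1; omega
  refine aperiodic hs (k+i) (j-i) (by omega) fun n hn => ?_
  have := (main (n-(k+i))).1 0 (by omega)
  rw [show n + (j-i) = k + j + (n-(k+i)) + 0 by omega, ← this]
  congr 1; omega

/-- Integer value of a letter. -/
def v (u : ℕ → Bool) (a : ℕ) : ℤ := if u a = true then 1 else 0

/-- Number of `true`s in the factor of length `n` at `a`. -/
def C (u : ℕ → Bool) (a n : ℕ) : ℤ := ∑ i ∈ Finset.range n, v u (a + i)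

lemma C_succ (u : ℕ → Bool) (a n : ℕ) : C u a (n+1) = C u a n + v u (a+n) :=
  Finset.sum_range_succ _ _

lemma C_add (u : ℕ → Bool) (a n m : ℕ) : C u a (n+m) = C u a n + C u (a+n) m := by
  simp only [C, Finset.sum_range_add, add_assoc]

lemma C_one (u : ℕ → Bool) (a : ℕ) : C u a 1 = v u a := by simp [C]

lemma C_zero (u : ℕ → Bool) (a : ℕ) : C u a 0 = 0 := by simp [C]

lemma v_cases (u : ℕ → Bool) (a : ℕ) : (u a = true ∧ v u a = 1) ∨ (u a = false ∧ v u a = 0) := by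
  unfold v; cases u a <;> simp

lemma v_inj {u : ℕ → Bool} {a b : ℕ} (h : v u a = v u b) : u a = u b := by
  rcases v_cases u a with h1 | h1 <;> rcases v_cases u b with h2 | h2 <;> simp_all

lemma v_congr {u : ℕ → Bool} {a b : ℕ} (h : u a = u b) : v u a = v u b := by
  simp [v, h]

lemma C_rev {u : ℕ → Bool} (a b n : ℕ) (h : ∀ i, i < n → u (a + i) = u (b + n - 1 - i)) :
    C u a n = C u b n := by
  unfold C
  rw [← Finset.sum_range_reflect]
  refine Finset.sum_congr rfl fun i hi => ?_
  rw [Finset.mem_range] at hi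
  apply v_congr
  rw [h _ (by omega)]
  congr 1; omega

lemma balanced {u : ℕ → Bool} (hs : St u) : ∀ n k l, C u k n - C u l n ≤ 1 := by
  intro n
  induction n using Nat.strong_induction_on with
  | _ n ih =>
  intro k l
  by_contra! hcon
  -- differences of prefixes
  have hD : ∀ m, 0 < m → m < n → C u k m - C u l m = 1 := by
    intro m h0 h1
    have e1 := ih m h1 k l
    have e2 := ih (n-m) (by omega) (k+m) (l+m)
    have e3 := C_add u k m (n-m)
    have e4 := C_add u l m (n-m)
    rw [show m + (n-m) = n by omega] at e3 e4
    omega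
  have hn2 : 2 ≤ n := by
    by_contra h
    have : n = 0 ∨ n = 1 := by omega
    rcases this with rfl | rfl
    · simp [C_zero] at hcon
    · simp only [C_one] at hcon
      have := v_cases u k
      have := v_cases u l
      omega
  obtain ⟨m, rfl⟩ : ∃ m, n = m + 2 := ⟨n-2, by omega⟩
  have hf := hD 1 (by omega) (by omega)
  rw [C_one, C_one] at hf
  have hl := hD (m+1) (by omega) (by omega)
  rw [C_succ u k (m+1), C_succ u l (m+1)] at hcon
  have ck := v_cases u k
  have cl := v_cases u l
  have ck' := v_cases u (k+(m+1))
  have cl' := v_cases u (l+(m+1))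
  have uk : u k = true ∧ v u k = 1 := by
    rcases ck with h | h
    · exact h
    · exfalso; omega
  have ul : u l = false ∧ v u l = 0 := by
    rcases cl with h | h
    · exfalso; omega
    · exact h
  have uk' : u (k+(m+1)) = true ∧ v u (k+(m+1)) = 1 := by
    rcases ck' with h | h
    · exact h
    · exfalso; omega
  have ul' : u (l+(m+1)) = false ∧ v u (l+(m+1)) = 0 := by
    rcases cl' with h | h
    · exfalso; omega
    · exact h
  have hmid : Ag u m (k+1) (l+1) := by
    intro i hi
    apply v_inj
    have e1 := hD (i+1) (by omega) (by omega)
    have e2 := hD (i+1+1) (by omega) (by omega)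
    rw [C_succ u k (i+1), C_succ u l (i+1)] at e2
    rw [show k + 1 + i = k + (i+1) by omega, show l + 1 + i = l + (i+1) by omega]
    omega
  have hpal : ∀ i, i < m → u (k + 1 + i) = u (k + m - i) := by
    intro j
    induction j using Nat.strong_induction_on with
    | _ j ihj =>
    intro hj
    by_cases hjj : m ≤ 2 * j
    · rcases Nat.lt_or_ge (m - 1 - j) j with h | h
      · have := ihj (m-1-j) h (by omega)
        rw [show k + 1 + j = k + m - (m - 1 - j) by omega, ← this]
        congr 1; omega
      · congr 1; omega
    by_contra hne
    have hl1 := hmid j hj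
    have hl2 := hmid (m - 1 - j) (by omega)
    rw [show k + 1 + (m-1-j) = k + m - j by omega] at hl2
    have hlm : ∀ i, i < j → u (l + 1 + i) = u (k + m - i) := by
      intro i hi
      rw [← hmid i (by omega), ihj i hi (by omega)]
    have hkm : ∀ i, i < j → u (k + 1 + i) = u (l + m - i) := by
      intro i hi
      rw [ihj i hi (by omega)]
      have := hmid (m - 1 - i) (by omega)
      rw [show k + 1 + (m-1-i) = k + m - i by omega] at this
      rw [this]; congr 1; omega
    have expand : ∀ a, C u a (j+2) = v u a + C u (a+1) j + v u (a+1+j) := by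
      intro a
      rw [C_succ u a (j+1), add_comm j 1, C_add, C_one, add_assoc a 1 j]
    rcases v_cases u (k+1+j) with ⟨a1, a2⟩ | ⟨a1, a2⟩
    · have b1 : u (k+m-j) = false := by
        rw [a1] at hne; simpa using (Ne.symm hne)
      -- prefix of the k-word, suffix of the l-word
      have e := ih (j+2) (by omega) k (l + m - j)
      have r := C_rev (u := u) (k+1) (l+m-j+1) j (by
        intro i hi; rw [hkm i hi]; congr 1; omega)
      rw [expand, expand, r, show l+m-j+1+j = l + (m+1) by omega] at e
      have : v u (l+m-j) = 0 := by
        have : u (l+m-j) = false := by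
          rw [← b1, hl2]; congr 1; omega
        simp [v, this]
      omega
    · have b1 : u (k+m-j) = true := by
        rw [a1] at hne; simpa using (Ne.symm hne)
      have e := ih (j+2) (by omega) (k + m - j) l
      have r := C_rev (u := u) (l+1) (k+m-j+1) j (by
        intro i hi; rw [hlm i hi]; congr 1; omega)
      rw [expand, expand, r, show k+m-j+1+j = k + (m+1) by omega] at e
      have : v u (k+m-j) = 1 := by simp [v, b1]
      have : v u (l+1+j) = 0 := by rw [← v_congr hl1, a2]
      omega
  obtain ⟨a, a', h1, h2⟩ := exists_special hs (m+1)
  have hak : Ag u m (a+1) (k+1) := by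
    refine unique_special hs (a' := a'+1) (b' := l+1) ?_ ?_ hmid ?_
    · intro i hi
      have := h1 (i+1) (by omega)
      rw [show a + 1 + i = a + (i+1) by omega, this]; congr 1; omega
    · rw [show a + 1 + m = a + (m+1) by omega, show a' + 1 + m = a' + (m+1) by omega]
      exact h2
    · rw [show k + 1 + m = k + (m+1) by omega, show l + 1 + m = l + (m+1) by omega, uk'.1, ul'.1]
      simp
  have hka : Ag u m (k+1) (a+1) := fun i hi => (hak i hi).symm
  rcases v_cases u a with ⟨ha, -⟩ | ⟨ha, -⟩
  · refine core hs (k := l) (s := a) (fun i hi => ?_) ?_ ?_ ?_ h1 h2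
    · rw [← hmid i hi, hka i hi]
    · rw [add_assoc, ul'.1, ul.1]
    · rw [ha, ul.1]; simp
    · intro i hi
      rw [← hmid i hi, hpal i hi]
      have := hmid (m - 1 - i) (by omega)
      rw [show k + 1 + (m-1-i) = k + m - i by omega] at this
      rw [this]; congr 1; omega
  · refine core hs (k := k) (s := a) hka ?_ ?_ hpal h1 h2
    · rw [add_assoc, uk'.1, uk.1]
    · rw [ha, uk.1]; simp

end SturmAux

theorem sturmian_balanced_and_not_eventually_periodic (u : ℕ → Bool)
    (hs : ∀ n : ℕ,
      Set.ncard {w : Fin n → Bool | ∃ k : ℕ, ∀ i : Fin n, w i = u (k + i)} = n + 1) :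
    (∀ n k l : ℕ,
      |(((Finset.range n).filter (fun i => u (k + i) = true)).card : ℤ) -
        (((Finset.range n).filter (fun i => u (l + i) = true)).card : ℤ)| ≤ 1) ∧
    ¬ ∃ (N : ℕ) (T : ℕ), 0 < T ∧ ∀ n : ℕ, N ≤ n → u (n + T) = u n := by
  have hst : SturmAux.St u := by
    intro n
    rw [← hs n]
    congr 1
    ext w
    simp only [Set.mem_range, Set.mem_ofPred_eq]
    refine exists_congr fun k => ⟨fun h i => ?_, fun h => ?_⟩
    · rw [← h]; rfl
    · funext i; exact (h i).symm
  refine ⟨fun n k l => ?_, ?_⟩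
  · have hC : ∀ a, (((Finset.range n).filter (fun i => u (a + i) = true)).card : ℤ)
        = SturmAux.C u a n := by
      intro a
      simp [SturmAux.C, SturmAux.v]
    rw [hC, hC, abs_le]
    have h1 := SturmAux.balanced hst n k l
    have h2 := SturmAux.balanced hst n l k
    constructor <;> linarith
  · rintro ⟨N, T, hT, h⟩
    exact SturmAux.aperiodic hst N T hT h
end

section
/- Let u : ℕ → Bool be balanced and not eventually periodic. Then u is Sturmian: for every n : ℕ, the complexity p(u, n) = Set.ncard {w : Fin n → Bool | ∃ k, ∀ i, w i = u (k + i)} equals n + 1. -/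
/-- Words of length `n` occurring in `u` followed by the letter `b`. -/
def sturmExt (u : ℕ → Bool) (n : ℕ) (b : Bool) : Set (Fin n → Bool) :=
  {w | ∃ k : ℕ, (∀ i : Fin n, w i = u (k + i)) ∧ u (k + n) = b}

lemma sturm_unbalanced (u : ℕ → Bool)
    (hbal : ∀ n k l : ℕ,
      |(((Finset.range n).filter (fun i => u (k + i) = true)).card : ℤ) -
        (((Finset.range n).filter (fun i => u (l + i) = true)).card : ℤ)| ≤ 1)
    (k l m : ℕ) (h1 : u k = true) (h2 : u (k + (m + 1)) = true) (h3 : u l = false)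
    (h4 : u (l + (m + 1)) = false) (h : ∀ i, i < m → u (k + (i + 1)) = u (l + (i + 1))) :
    False := by
  have hb := hbal (m + 1 + 1) k l
  simp only [Finset.card_filter] at hb
  rw [Finset.sum_range_succ, Finset.sum_range_succ', Finset.sum_range_succ (n := m + 1),
    Finset.sum_range_succ'] at hb
  have hs : ∑ i ∈ Finset.range m, (if u (k + (i + 1)) = true then 1 else 0)
      = ∑ i ∈ Finset.range m, (if u (l + (i + 1)) = true then 1 else 0) := by
    apply Finset.sum_congr rfl
    intro i hi
    rw [h i (Finset.mem_range.1 hi)]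
  rw [hs] at hb
  simp only [add_zero, h1, h2, h3, h4] at hb
  rw [abs_le] at hb
  push_cast at hb
  simp at hb
  omega

lemma sturm_rs_unique (u : ℕ → Bool)
    (hbal : ∀ n k l : ℕ,
      |(((Finset.range n).filter (fun i => u (k + i) = true)).card : ℤ) -
        (((Finset.range n).filter (fun i => u (l + i) = true)).card : ℤ)| ≤ 1)
    (n : ℕ) (w v : Fin n → Bool)
    (hw : w ∈ sturmExt u n true ∩ sturmExt u n false)
    (hv : v ∈ sturmExt u n true ∩ sturmExt u n false) : w = v := by
  by_contra hne
  obtain ⟨i0, hi0⟩ := Function.ne_iff.1 hne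
  obtain ⟨j, hj, hmax⟩ := Finset.exists_max_image
    (Finset.univ.filter (fun i => w i ≠ v i)) id ⟨i0, by simpa using hi0⟩
  have hj' : w j ≠ v j := by simpa using hj
  have hag : ∀ i, j < i → w i = v i := by
    intro i hi
    by_contra hc
    exact absurd (hmax i (by simpa using hc)) (not_le.2 hi)
  have key : ∀ a b : Fin n → Bool, a ∈ sturmExt u n true → b ∈ sturmExt u n false →
      a j = true → b j = false → (∀ i, j < i → a i = b i) → False := by
    rintro a b ⟨k, hk, hk'⟩ ⟨l, hl, hl'⟩ ha hb hab
    have hjn := j.2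
    refine sturm_unbalanced u hbal (k + j) (l + j) (n - j - 1) ?_ ?_ ?_ ?_ ?_
    · rw [← hk, ha]
    · rw [← hk']; congr 1; omega
    · rw [← hl, hb]
    · rw [← hl']; congr 1; omega
    · intro i hi
      have := hab ⟨j + (i + 1), by omega⟩ (by rw [Fin.lt_def]; simp)
      rw [hk, hl] at this
      simpa [add_assoc] using this
  cases hwj : w j <;> cases hvj : v j
  · simp [hwj, hvj] at hj'
  · exact key v w hv.1 hw.2 hvj hwj (fun i hi => (hag i hi).symm)
  · exact key w v hw.1 hv.2 hwj hvj hag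
  · simp [hwj, hvj] at hj'

lemma sturm_rs_nonempty (u : ℕ → Bool)
    (hnp : ¬ ∃ (N : ℕ) (T : ℕ), 0 < T ∧ ∀ n : ℕ, N ≤ n → u (n + T) = u n) (n : ℕ) :
    (sturmExt u n true ∩ sturmExt u n false).Nonempty := by
  by_contra hc
  apply hnp
  have hdet : ∀ k l, (∀ i, i < n → u (k + i) = u (l + i)) → u (k + n) = u (l + n) := by
    intro k l h
    by_contra hne
    apply hc
    refine ⟨fun i => u (k + i), ?_⟩
    have hk : ∀ b, u (k + n) = b → (fun i : Fin n => u (k + i)) ∈ sturmExt u n b :=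
      fun b hb => ⟨k, fun i => rfl, hb⟩
    have hl : ∀ b, u (l + n) = b → (fun i : Fin n => u (k + i)) ∈ sturmExt u n b :=
      fun b hb => ⟨l, fun i => h i i.2, hb⟩
    cases h1 : u (k + n) <;> cases h2 : u (l + n)
    · simp [h1, h2] at hne
    · exact ⟨hl _ h2, hk _ h1⟩
    · exact ⟨hk _ h1, hl _ h2⟩
    · simp [h1, h2] at hne
  obtain ⟨k, l, hkl, heq⟩ := Finite.exists_ne_map_eq_of_infinite
    (fun k : ℕ => (fun i : Fin n => u (k + i)))
  have main : ∀ k l, k < l → (∀ i, i < n → u (k + i) = u (l + i)) →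
      ∃ (N : ℕ) (T : ℕ), 0 < T ∧ ∀ n : ℕ, N ≤ n → u (n + T) = u n := by
    intro k l hlt h
    have step : ∀ m i, i < n → u (k + m + i) = u (l + m + i) := by
      intro m
      induction m with
      | zero => simpa using h
      | succ m ih =>
        intro i hi
        by_cases hin : i + 1 < n
        · have := ih (i + 1) hin
          convert this using 2 <;> ring
        · have := hdet _ _ ih
          have hn : n = i + 1 := by omega
          convert this using 2 <;> omega
    refine ⟨k + n, l - k, by omega, fun x hx => ?_⟩
    have := hdet _ _ (step (x - k - n))
    convert this.symm using 2 <;> omega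
  have heq' : ∀ i, i < n → u (k + i) = u (l + i) := fun i hi => congrFun heq ⟨i, hi⟩
  rcases lt_or_gt_of_ne hkl with h | h
  · exact main k l h heq'
  · exact main l k h (fun i hi => (heq' i hi).symm)

lemma sturm_split (u : ℕ → Bool) (n : ℕ) :
    {w : Fin (n + 1) → Bool | ∃ k : ℕ, ∀ i : Fin (n + 1), w i = u (k + i)} =
      (fun w => Fin.snoc (α := fun _ => Bool) w true) '' sturmExt u n true ∪
      (fun w => Fin.snoc (α := fun _ => Bool) w false) '' sturmExt u n false := by
  have himg : ∀ b, (fun w => Fin.snoc (α := fun _ => Bool) w b) '' sturmExt u n b ⊆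
      {w : Fin (n + 1) → Bool | ∃ k : ℕ, ∀ i : Fin (n + 1), w i = u (k + i)} := by
    rintro b _ ⟨w, ⟨k, hk, hb⟩, rfl⟩
    refine ⟨k, fun i => ?_⟩
    refine Fin.lastCases ?_ (fun i => ?_) i
    · simp [hb]
    · simp [hk]
  apply Set.Subset.antisymm
  · rintro w ⟨k, hk⟩
    have hmem : ∀ b, u (k + n) = b →
        w ∈ (fun w => Fin.snoc (α := fun _ => Bool) w b) '' sturmExt u n b := by
      intro b hb
      refine ⟨Fin.init w, ⟨k, fun i => by simp [Fin.init, hk], hb⟩, ?_⟩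
      have : b = w (Fin.last n) := by rw [hk, ← hb]; simp
      rw [this]
      exact Fin.snoc_init_self w
    cases h : u (k + n)
    · exact Or.inr (hmem _ h)
    · exact Or.inl (hmem _ h)
  · exact Set.union_subset (himg _) (himg _)

lemma sturm_union (u : ℕ → Bool) (n : ℕ) :
    sturmExt u n true ∪ sturmExt u n false =
      {w : Fin n → Bool | ∃ k : ℕ, ∀ i : Fin n, w i = u (k + i)} := by
  ext w
  constructor
  · rintro (⟨k, hk, -⟩ | ⟨k, hk, -⟩) <;> exact ⟨k, hk⟩
  · rintro ⟨k, hk⟩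
    cases h : u (k + n)
    · exact Or.inr ⟨k, hk, h⟩
    · exact Or.inl ⟨k, hk, h⟩

theorem balanced_not_eventually_periodic_is_sturmian (u : ℕ → Bool)
    (hbal : ∀ n k l : ℕ,
      |(((Finset.range n).filter (fun i => u (k + i) = true)).card : ℤ) -
        (((Finset.range n).filter (fun i => u (l + i) = true)).card : ℤ)| ≤ 1)
    (hnp : ¬ ∃ (N : ℕ) (T : ℕ), 0 < T ∧ ∀ n : ℕ, N ≤ n → u (n + T) = u n) :
    ∀ n : ℕ,
      Set.ncard {w : Fin n → Bool | ∃ k : ℕ, ∀ i : Fin n, w i = u (k + i)} = n + 1 := by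
  intro n
  induction n with
  | zero =>
    rw [Set.ncard_eq_one]
    refine ⟨Fin.elim0, ?_⟩
    ext w
    simp [Subsingleton.elim w Fin.elim0]
  | succ n ih =>
    have hinj : ∀ b : Bool, Function.Injective
        (fun w : Fin n → Bool => (Fin.snoc (α := fun _ => Bool) w b : Fin (n + 1) → Bool)) := by
      intro b w v h
      have := congrArg (Fin.init (α := fun _ => Bool)) h
      simpa using this
    have h1 : (sturmExt u n true ∩ sturmExt u n false).ncard = 1 := by
      obtain ⟨a, ha⟩ := sturm_rs_nonempty u hnp n
      rw [Set.ncard_eq_one]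
      refine ⟨a, Set.eq_singleton_iff_unique_mem.2 ⟨ha, fun b hb => ?_⟩⟩
      exact sturm_rs_unique u hbal n b a hb ha
    have h2 := Set.ncard_union_add_ncard_inter (sturmExt u n true) (sturmExt u n false)
      (Set.toFinite _) (Set.toFinite _)
    rw [sturm_union, ih, h1] at h2
    rw [sturm_split, Set.ncard_union_eq ?_ (Set.toFinite _) (Set.toFinite _),
      Set.ncard_image_of_injective _ (hinj true), Set.ncard_image_of_injective _ (hinj false),
      ← h2]
    rw [Set.disjoint_left]
    rintro _ ⟨w, -, rfl⟩ ⟨v, -, h⟩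
    have := congrFun h (Fin.last n)
    simp at this
end

section
/- Let u : ℕ → Bool and suppose there exists n : ℕ such that p(u, n + 1) = p(u, n), where p(u, n) = Set.ncard {w : Fin n → Bool | ∃ k, ∀ i, w i = u (k + i)}. Then u is eventually periodic: there exist N : ℕ and T > 0 such that u(m + T) = u(m) for all m ≥ N. -/
theorem complexity_stabilizes_eventually_periodic (u : ℕ → Bool)
    (h : ∃ n : ℕ,
      Set.ncard {w : Fin (n + 1) → Bool | ∃ k : ℕ, ∀ i : Fin (n + 1), w i = u (k + i)} =
      Set.ncard {w : Fin n → Bool | ∃ k : ℕ, ∀ i : Fin n, w i = u (k + i)}) :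
    ∃ (N : ℕ) (T : ℕ), 0 < T ∧ ∀ m : ℕ, N ≤ m → u (m + T) = u m := by
  obtain ⟨n, hn⟩ := h
  -- restriction of words of length n+1 to their first n letters
  have himg : (fun (w : Fin (n + 1) → Bool) (i : Fin n) => w i.castSucc) ''
      {w : Fin (n + 1) → Bool | ∃ k : ℕ, ∀ i : Fin (n + 1), w i = u (k + i)} =
      {w : Fin n → Bool | ∃ k : ℕ, ∀ i : Fin n, w i = u (k + i)} := by
    ext w
    constructor
    · rintro ⟨v, ⟨k, hk⟩, rfl⟩
      exact ⟨k, fun i => by simpa using hk i.castSucc⟩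
    · rintro ⟨k, hk⟩
      refine ⟨fun i => u (k + i), ⟨k, fun i => rfl⟩, ?_⟩
      funext i
      simpa using (hk i).symm
  rw [← himg] at hn
  have hinj := (Set.ncard_image_iff (Set.toFinite _)).1 hn.symm
  have key : ∀ j k : ℕ, (∀ i < n, u (j + i) = u (k + i)) → u (j + n) = u (k + n) := by
    intro j k hjk
    have := hinj (x₁ := fun i => u (j + i)) ⟨j, fun i => rfl⟩
      (x₂ := fun i => u (k + i)) ⟨k, fun i => rfl⟩
      (by funext i; simpa using hjk i i.2)
    simpa using congrFun this (Fin.last n)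
  obtain ⟨j, k, hne, hjk⟩ :=
    Finite.exists_ne_map_eq_of_infinite (fun (k : ℕ) (i : Fin n) => u (k + i))
  wlog hlt : j < k generalizing j k
  · exact this k j hne.symm hjk.symm (by omega)
  have hall : ∀ t, u (j + t) = u (k + t) := by
    intro t
    induction t using Nat.strong_induction_on with
    | _ t ih =>
      by_cases ht : t < n
      · exact congrFun hjk ⟨t, ht⟩
      · have := key (j + (t - n)) (k + (t - n)) (fun i hi => by
          have := ih (t - n + i) (by omega)
          simpa [add_assoc] using this)
        have e : t - n + n = t := by omega
        simpa [add_assoc, e] using this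
  refine ⟨j, k - j, by omega, fun m hm => ?_⟩
  have := hall (m - j)
  rw [show j + (m - j) = m by omega, show k + (m - j) = m + (k - j) by omega] at this
  exact this.symm
end

section
/- Let u : ℕ → Bool be not eventually periodic. Then for every n : ℕ, the complexity satisfies p(u, n) ≥ n + 1, where p(u, n) = Set.ncard {w : Fin n → Bool | ∃ k, ∀ i, w i = u (k + i)}. -/
theorem not_eventually_periodic_complexity_ge (u : ℕ → Bool)
    (hnp : ¬ ∃ (N : ℕ) (T : ℕ), 0 < T ∧ ∀ n : ℕ, N ≤ n → u (n + T) = u n) :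
    ∀ n : ℕ,
      n + 1 ≤ Set.ncard {w : Fin n → Bool | ∃ k : ℕ, ∀ i : Fin n, w i = u (k + i)} := by
  intro n
  induction n with
  | zero =>
    have h : 0 < Set.ncard {w : Fin 0 → Bool | ∃ k : ℕ, ∀ i : Fin 0, w i = u (k + i)} := by
      rw [Set.ncard_pos (Set.toFinite _)]
      exact ⟨fun i => u (0 + i), 0, fun i => rfl⟩
    omega
  | succ n ih =>
    by_contra hlt
    apply hnp
    set S := {w : Fin (n+1) → Bool | ∃ k : ℕ, ∀ i : Fin (n+1), w i = u (k + i)} with hS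
    let f : (Fin (n+1) → Bool) → (Fin n → Bool) := fun w i => w i.castSucc
    have him : f '' S = {w : Fin n → Bool | ∃ k : ℕ, ∀ i : Fin n, w i = u (k + i)} := by
      ext w
      constructor
      · rintro ⟨v, ⟨k, hk⟩, rfl⟩
        exact ⟨k, fun i => hk i.castSucc⟩
      · rintro ⟨k, hk⟩
        refine ⟨fun i => u (k + i), ⟨k, fun i => rfl⟩, ?_⟩
        funext i
        exact (hk i).symm
    have hle : (f '' S).ncard ≤ S.ncard := Set.ncard_image_le (Set.toFinite _)
    have heq : (f '' S).ncard = S.ncard := by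
      rw [← him] at ih
      omega
    have hinj : Set.InjOn f S := Set.injOn_of_ncard_image_eq heq (Set.toFinite _)
    -- the next letter is determined by the current window
    have key : ∀ k l : ℕ, (∀ i < n, u (k + i) = u (l + i)) → u (k + n) = u (l + n) := by
      intro k l h
      have h1 := hinj (x₁ := fun i => u (k + i)) (x₂ := fun i => u (l + i))
        ⟨k, fun i => rfl⟩ ⟨l, fun i => rfl⟩ (by funext i; exact h i i.2)
      simpa using congrFun h1 (Fin.last n)
    obtain ⟨k, l, hkl, hw⟩ : ∃ k l : ℕ, k < l ∧ ∀ i < n, u (k + i) = u (l + i) := by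
      obtain ⟨k, l, hne, h⟩ := Finite.exists_ne_map_eq_of_infinite
        (fun (k : ℕ) (i : Fin n) => u (k + i))
      have h' : ∀ i < n, u (k + i) = u (l + i) := fun i hi => congrFun h ⟨i, hi⟩
      rcases lt_or_gt_of_ne hne with h1 | h1
      · exact ⟨k, l, h1, h'⟩
      · exact ⟨l, k, h1, fun i hi => (h' i hi).symm⟩
    have hall : ∀ j, u (k + j) = u (l + j) := by
      intro j
      induction j using Nat.strong_induction_on with
      | _ j ihj =>
        by_cases hj : j < n
        · exact hw j hj
        · have h2 := key (k + (j - n)) (l + (j - n)) (fun i hi => by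
            have := ihj (j - n + i) (by omega)
            simpa [add_assoc] using this)
          have e : j - n + n = j := by omega
          simpa [add_assoc, e] using h2
    refine ⟨k, l - k, by omega, fun m hm => ?_⟩
    have h3 := hall (m - k)
    rw [show k + (m - k) = m by omega, show l + (m - k) = m + (l - k) by omega] at h3
    exact h3.symm
end
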